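/- Let wt and w̃t be weight functions from ℤ×ℕ to a field with w̃t(p) ≠ 0 for all p. For 1 ≤ i, j ≤ k let A_i = (−n−2i+2, 0), B_j = (n+2j−2, 0), and d_n^{i,j} = Σ_{D∈Dyck(A_i→B_j)} wt_V(D). Then det(d_n^{i,j})_{i,j=1}^k = Σ over all tuples (D_1 ≤ D_2 ≤ ⋯ ≤ D_k) ∈ Dyck^k_{2n} of wt_V(D_1)⋯wt_V(D_k) · Π_{i=1}^{k−1} Π_{p∈D_i∩D_{i+1}} (1 − 1/w̃t(p)). -/

import Mathlib

open Finset

attribute [local instance 10] Classical.propDecidable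

noncomputable section

namespace Paper

/-! ### Words and permutation statistics (all words are 1-based). -/

/-- The word (one-line notation, 1-based) of a permutation of `{1, …, N}`:
`word π i = π(i)` for `1 ≤ i ≤ N`, and `0` otherwise. -/
def word {N : ℕ} (π : Equiv.Perm (Fin N)) (i : ℕ) : ℕ :=
  if h : 1 ≤ i ∧ i ≤ N then (π ⟨i - 1, by omega⟩ : ℕ) + 1 else 0

/-- The major index of a word of length `N`: the sum of the descents. -/
def majW (N : ℕ) (w : ℕ → ℕ) : ℕ :=
  ∑ i ∈ Finset.Icc 1 (N - 1), if w (i + 1) < w i then i else 0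

/-- The number of inversions of a word of length `N`. -/
def invW (N : ℕ) (w : ℕ → ℕ) : ℕ :=
  (((Finset.Icc 1 N) ×ˢ (Finset.Icc 1 N)).filter
    fun p => p.1 < p.2 ∧ w p.2 < w p.1).card

/-- The number of descents of a word of length `m`. -/
def desW (m : ℕ) (w : ℕ → ℕ) : ℕ :=
  ((Finset.Icc 1 (m - 1)).filter fun i => w (i + 1) < w i).card

/-- The number of ascents of a word of length `m`. -/
def ascW (m : ℕ) (w : ℕ → ℕ) : ℕ :=
  ((Finset.Icc 1 (m - 1)).filter fun i => w i < w (i + 1)).card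

/-- The number of non-descents of a word of length `m`. -/
def ndesW (m : ℕ) (w : ℕ → ℕ) : ℕ :=
  ((Finset.Icc 1 m).filter fun i => i = m ∨ w i < w (i + 1)).card

/-- The number of non-ascents of a word of length `m`. -/
def nascW (m : ℕ) (w : ℕ → ℕ) : ℕ :=
  ((Finset.Icc 1 m).filter fun i => i = m ∨ ¬ w i < w (i + 1)).card

/-- `π_e = π₂π₄⋯`, the subword of even-position entries, as a 1-based word. -/
def evenWord {N : ℕ} (π : Equiv.Perm (Fin N)) (j : ℕ) : ℕ := word π (2 * j)

/-- `π_o = π₁π₃⋯`, the subword of odd-position entries, as a 1-based word. -/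
def oddWord {N : ℕ} (π : Equiv.Perm (Fin N)) (j : ℕ) : ℕ := word π (2 * j - 1)

/-- A word of length `N` is alternating: `w₁ < w₂ > w₃ < w₄ > ⋯`. -/
def IsAltW (N : ℕ) (w : ℕ → ℕ) : Prop :=
  ∀ i ∈ Finset.Icc 1 (N - 1), (i % 2 = 1 → w i < w (i + 1)) ∧ (i % 2 = 0 → w (i + 1) < w i)

/-- A word of length `N` is reverse alternating: `w₁ > w₂ < w₃ > w₄ < ⋯`. -/
def IsRaltW (N : ℕ) (w : ℕ → ℕ) : Prop :=
  ∀ i ∈ Finset.Icc 1 (N - 1), (i % 2 = 1 → w (i + 1) < w i) ∧ (i % 2 = 0 → w i < w (i + 1))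

/-- `Alt_N`, the set of alternating permutations of `{1, …, N}`. -/
def altPerms (N : ℕ) : Finset (Equiv.Perm (Fin N)) :=
  Finset.univ.filter fun π => IsAltW N (word π)

/-- `Ralt_N`, the set of reverse alternating permutations of `{1, …, N}`. -/
def raltPerms (N : ℕ) : Finset (Equiv.Perm (Fin N)) :=
  Finset.univ.filter fun π => IsRaltW N (word π)

/-- `κ_N = (1)(2,3)(4,5)⋯`, acting on the 1-based values `{1, …, N}`. -/
def kappaNat (N j : ℕ) : ℕ :=
  if j % 2 = 0 ∧ 2 ≤ j ∧ j + 1 ≤ N then j + 1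
  else if j % 2 = 1 ∧ 3 ≤ j ∧ j ≤ N then j - 1
  else j

/-- `η_N = (1,2)(3,4)⋯`, acting on the 1-based values `{1, …, N}`. -/
def etaNat (N j : ℕ) : ℕ :=
  if j % 2 = 1 ∧ j + 1 ≤ N then j + 1
  else if j % 2 = 0 ∧ 2 ≤ j ∧ j ≤ N then j - 1
  else j

/-- `maj(π⁻¹)`. -/
def majInv (N : ℕ) (π : Equiv.Perm (Fin N)) : ℕ := majW N (word π.symm)

/-- `maj(κ_N π⁻¹)`. -/
def majKappaInv (N : ℕ) (π : Equiv.Perm (Fin N)) : ℕ :=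
  majW N fun i => kappaNat N (word π.symm i)

/-- `maj(η_N π⁻¹)`. -/
def majEtaInv (N : ℕ) (π : Equiv.Perm (Fin N)) : ℕ :=
  majW N fun i => etaNat N (word π.symm i)

/-- The reversal permutation `i ↦ N + 1 - i` of `Fin N`. -/
def revPerm (N : ℕ) : Equiv.Perm (Fin N) :=
  ⟨Fin.rev, Fin.rev, fun i => Fin.rev_rev i, fun i => Fin.rev_rev i⟩

/-- `φ(π)ᵢ = (N+1) - π_{N+1-i}`. -/
def phiMap {N : ℕ} (π : Equiv.Perm (Fin N)) : Equiv.Perm (Fin N) :=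
  ((revPerm N).trans π).trans (revPerm N)

/-! ### Lattice paths.

A path with `L` unit steps is encoded by `s : Fin L → Bool` (`true` = up-step `(1,1)`,
`false` = down-step `(1,-1)`). -/

/-- The vertical displacement of the `j`-th step. -/
def stepVal {L : ℕ} (s : Fin L → Bool) (j : ℕ) : ℤ :=
  if h : j < L then (if s ⟨j, h⟩ then 1 else -1) else 0

/-- The height of the path after `i` steps. -/
def pht {L : ℕ} (s : Fin L → Bool) (i : ℕ) : ℤ := ∑ j ∈ Finset.range i, stepVal s j

/-- A Dyck path: stays (weakly) above the `x`-axis and ends at height `0`. -/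
def IsDyck {L : ℕ} (s : Fin L → Bool) : Prop :=
  (∀ i ∈ Finset.range (L + 1), 0 ≤ pht s i) ∧ pht s L = 0

/-- The Dyck paths with `L` steps. -/
def dyckPaths (L : ℕ) : Finset (Fin L → Bool) := Finset.univ.filter fun s => IsDyck s

/-- The (indices of the) valleys of a path: a down-step followed by an up-step. -/
def valleys {L : ℕ} (s : Fin L → Bool) : Finset ℕ :=
  (Finset.Icc 1 (L - 1)).filter fun i => stepVal s (i - 1) = -1 ∧ stepVal s i = 1

/-- The (indices of the) peaks of a path: an up-step followed by a down-step. -/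
def peaks {L : ℕ} (s : Fin L → Bool) : Finset ℕ :=
  (Finset.Icc 1 (L - 1)).filter fun i => stepVal s (i - 1) = 1 ∧ stepVal s i = -1

/-- The (indices of the) high peaks of a path: peaks of height at least `2`. -/
def highPeaks {L : ℕ} (s : Fin L → Bool) : Finset ℕ :=
  (peaks s).filter fun i => 2 ≤ pht s i

/-- The height over abscissa `x` of a path starting at `(-m, 0)`. -/
def aht (m : ℕ) {L : ℕ} (s : Fin L → Bool) (x : ℤ) : ℤ := pht s (x + m).toNat

/-- `D₁ < D₂`, for `D₁` starting at `(-m₁,0)` and `D₂` at `(-m₂,0)`, `m₁ ≤ m₂`: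
strictly below on the common range of abscissas. -/
def PathLT (m₁ m₂ : ℕ) {L₁ L₂ : ℕ} (s₁ : Fin L₁ → Bool) (s₂ : Fin L₂ → Bool) : Prop :=
  ∀ x ∈ Finset.Icc (-(m₁ : ℤ)) (m₁ : ℤ), aht m₁ s₁ x < aht m₂ s₂ x

/-- `D₁ ≤ D₂`: weakly below, sharing no step. -/
def PathLE (m₁ m₂ : ℕ) {L₁ L₂ : ℕ} (s₁ : Fin L₁ → Bool) (s₂ : Fin L₂ → Bool) : Prop :=
  (∀ x ∈ Finset.Icc (-(m₁ : ℤ)) (m₁ : ℤ), aht m₁ s₁ x ≤ aht m₂ s₂ x) ∧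
    ∀ x ∈ Finset.Icc (-(m₁ : ℤ)) ((m₁ : ℤ) - 1),
      ¬(aht m₁ s₁ x = aht m₂ s₂ x ∧ aht m₁ s₁ (x + 1) = aht m₂ s₂ (x + 1))

/-- The abscissas of the common lattice points of two paths. -/
def interPts (m₁ m₂ : ℕ) {L₁ L₂ : ℕ} (s₁ : Fin L₁ → Bool) (s₂ : Fin L₂ → Bool) : Finset ℤ :=
  (Finset.Icc (-(m₁ : ℤ)) (m₁ : ℤ)).filter fun x => aht m₁ s₁ x = aht m₂ s₂ x

/-- `Dyck^k_{2n}`: tuples `(D₁, …, D_k)` with `D_i ∈ Dyck((-n-2i+2,0) → (n+2i-2,0))`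
(0-based: `D_i` has half-length `n + 2i`). -/
abbrev DyckTuple (n k : ℕ) := ∀ i : Fin k, Fin (2 * (n + 2 * (i : ℕ))) → Bool

/-- The tuples `(D₁ ≤ D₂ ≤ ⋯ ≤ D_k) ∈ Dyck^k_{2n}`. -/
def weakTuples (n k : ℕ) : Finset (DyckTuple n k) :=
  Finset.univ.filter fun D =>
    (∀ i : Fin k, IsDyck (D i)) ∧
      ∀ (i : ℕ) (h : i + 1 < k),
        PathLE (n + 2 * i) (n + 2 * (i + 1)) (D ⟨i, by omega⟩) (D ⟨i + 1, h⟩)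

/-- The tuples `(D₁ < D₂ < ⋯ < D_k) ∈ Dyck^k_{2n}`. -/
def strictTuples (n k : ℕ) : Finset (DyckTuple n k) :=
  Finset.univ.filter fun D =>
    (∀ i : Fin k, IsDyck (D i)) ∧
      ∀ (i : ℕ) (h : i + 1 < k),
        PathLT (n + 2 * i) (n + 2 * (i + 1)) (D ⟨i, by omega⟩) (D ⟨i + 1, h⟩)

/-- The lattice points of a path starting at `(-m, 0)`, as a finite subset of `ℤ × ℤ`. -/
def pathPoints (m : ℕ) {L : ℕ} (s : Fin L → Bool) : Finset (ℤ × ℤ) :=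
  (Finset.range (L + 1)).image fun t : ℕ => (-(m : ℤ) + (t : ℤ), pht s t)

/-- The non-valley lattice points of a path starting at `(-m, 0)`. -/
def nonValleyPoints (m : ℕ) {L : ℕ} (s : Fin L → Bool) : Finset (ℤ × ℤ) :=
  ((Finset.range (L + 1)).filter fun t => t ∉ valleys s).image
    fun t : ℕ => (-(m : ℤ) + (t : ℤ), pht s t)

section Weights

variable {F : Type*} [Field F]

/-- The `i`-th lattice point (in `ℤ × ℕ`) of a path starting at `(a, 0)`. -/
def ptOf (a : ℤ) {L : ℕ} (s : Fin L → Bool) (i : ℕ) : ℤ × ℕ := (a + i, (pht s i).toNat)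

/-- `wt_V(D) = ∏_{p ∈ D} wt(p) · ∏_{p ∈ V(D)} w̃t(p)` for a path starting at `(a, 0)`. -/
def wtVal (wt wte : ℤ × ℕ → F) (a : ℤ) {L : ℕ} (s : Fin L → Bool) : F :=
  (∏ i ∈ Finset.range (L + 1), wt (ptOf a s i)) * ∏ i ∈ valleys s, wte (ptOf a s i)

/-- `wt_HP(D) = ∏_{p ∈ D} wt(p) · ∏_{p ∈ HP(D)} w̃t(p)` for a path starting at `(a, 0)`. -/
def wtHigh (wt wte : ℤ × ℕ → F) (a : ℤ) {L : ℕ} (s : Fin L → Bool) : F :=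
  (∏ i ∈ Finset.range (L + 1), wt (ptOf a s i)) * ∏ i ∈ highPeaks s, wte (ptOf a s i)

/-- `∏_{p ∈ D₁ ∩ D₂} f(p)`, for `D₁` starting at `(-m₁,0)` and `D₂` at `(-m₂,0)`. -/
def interProd (f : ℤ × ℕ → F) (m₁ m₂ : ℕ) {L₁ L₂ : ℕ}
    (s₁ : Fin L₁ → Bool) (s₂ : Fin L₂ → Bool) : F :=
  ∏ x ∈ interPts m₁ m₂ s₁ s₂, f (x, (aht m₁ s₁ x).toNat)

/-- The sum over `(D₁ ≤ ⋯ ≤ D_k) ∈ Dyck^k_{2n}` of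
`wt_V(D₁)⋯wt_V(D_k) ∏_{i=1}^{k-1} ∏_{p ∈ D_i ∩ D_{i+1}} (1 - w̃t(p)⁻¹)`. -/
def weakSum (wt wte : ℤ × ℕ → F) (n k : ℕ) : F :=
  ∑ D ∈ weakTuples n k,
    (∏ i : Fin k, wtVal wt wte (-(n : ℤ) - 2 * (i : ℕ)) (D i)) *
      ∏ j : Fin (k - 1),
        interProd (fun p => 1 - (wte p)⁻¹) (n + 2 * (j : ℕ)) (n + 2 * ((j : ℕ) + 1))
          (D ⟨(j : ℕ), by have := j.isLt; omega⟩)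
          (D ⟨(j : ℕ) + 1, by have := j.isLt; omega⟩)

/-- The sum over `(D₁ < ⋯ < D_k) ∈ Dyck^k_{2n}` of `wt_V(D₁)⋯wt_V(D_k)`. -/
def strictSum (wt wte : ℤ × ℕ → F) (n k : ℕ) : F :=
  ∑ D ∈ strictTuples n k, ∏ i : Fin k, wtVal wt wte (-(n : ℤ) - 2 * (i : ℕ)) (D i)

end Weights

/-! ### Schröder paths.

A path with `L` steps is encoded by `st : Fin L → Fin 3`
(`0` = up-step `(1,1)`, `1` = down-step `(1,-1)`, `2` = horizontal step `(2,0)`). -/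

/-- The horizontal displacement of the `j`-th step. -/
def stepX {L : ℕ} (st : Fin L → Fin 3) (j : ℕ) : ℕ :=
  if h : j < L then (if st ⟨j, h⟩ = 2 then 2 else 1) else 0

/-- The vertical displacement of the `j`-th step. -/
def stepY {L : ℕ} (st : Fin L → Fin 3) (j : ℕ) : ℤ :=
  if h : j < L then (if st ⟨j, h⟩ = 0 then 1 else if st ⟨j, h⟩ = 1 then -1 else 0) else 0

/-- The horizontal position (relative to the start) after `j` steps. -/
def xpos {L : ℕ} (st : Fin L → Fin 3) (j : ℕ) : ℕ := ∑ t ∈ Finset.range j, stepX st t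

/-- The height after `j` steps. -/
def ypos {L : ℕ} (st : Fin L → Fin 3) (j : ℕ) : ℤ := ∑ t ∈ Finset.range j, stepY st t

/-- A (little) Schröder path of horizontal span `2m`: nonnegative heights, ends at
height `0`, and no horizontal step on the `x`-axis. -/
def IsSch (m : ℕ) {L : ℕ} (st : Fin L → Fin 3) : Prop :=
  xpos st L = 2 * m ∧ (∀ j ∈ Finset.range (L + 1), 0 ≤ ypos st j) ∧ ypos st L = 0 ∧
    ∀ j ∈ Finset.range L, stepX st j = 2 → ypos st j ≠ 0

/-- The height of a Schröder path over the relative abscissa `x` (midpoints of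
horizontal steps get the height of that horizontal step). -/
def schHeight {L : ℕ} (st : Fin L → Fin 3) (x : ℕ) : ℤ :=
  ∑ t ∈ Finset.range L, if xpos st (t + 1) ≤ x then stepY st t else 0

/-- The relative abscissa `x` is the midpoint of a horizontal step. -/
def IsHMid {L : ℕ} (st : Fin L → Fin 3) (x : ℕ) : Prop :=
  ∃ j ∈ Finset.range L, stepX st j = 2 ∧ xpos st j + 1 = x

/-- The number of horizontal steps of a Schröder path. -/
def hsCount {L : ℕ} (st : Fin L → Fin 3) : ℕ :=
  ((Finset.range L).filter fun j => stepX st j = 2).card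

/-- `wt_Sch(c, S) = c^{hs(S)} ∏_{p ∈ S} wt(p)` for a Schröder path starting at `(a,0)`. -/
def wtSch {F : Type*} [Field F] (wt : ℤ × ℕ → F) (c : F) (a : ℤ) {L : ℕ}
    (st : Fin L → Fin 3) : F :=
  c ^ hsCount st * ∏ j ∈ Finset.range (L + 1), wt (a + xpos st j, (ypos st j).toNat)

/-- `φ_V(S) = D`: the Dyck path `D` (with `L'` steps) is obtained from the Schröder
path `S` by replacing each horizontal step by a down-step followed by an up-step. -/
def PhiVEq {L L' : ℕ} (st : Fin L → Fin 3) (s : Fin L' → Bool) : Prop :=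
  ∀ x ∈ Finset.range (L' + 1),
    pht s x = schHeight st x - (if IsHMid st x then 1 else 0)

/-- `φ_HP(S) = D`: the Dyck path `D` is obtained from the Schröder path `S` by
replacing each horizontal step by an up-step followed by a down-step. -/
def PhiHPEq {L L' : ℕ} (st : Fin L → Fin 3) (s : Fin L' → Bool) : Prop :=
  ∀ x ∈ Finset.range (L' + 1),
    pht s x = schHeight st x + (if IsHMid st x then 1 else 0)

/-! ### Young diagrams, excited and pleasant diagrams, reverse plane partitions. -/

/-- The cells (1-based, matrix coordinates) of the staircase `δ_m = (m-1, m-2, …, 1)`. -/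
def deltaCells (m : ℕ) : Finset (ℕ × ℕ) :=
  ((Finset.Icc 1 m) ×ˢ (Finset.Icc 1 m)).filter fun c => c.1 + c.2 ≤ m

/-- An excited move inside the Young diagram `lam`. -/
def ExcitedStep (lam : Finset (ℕ × ℕ)) (D D' : Finset (ℕ × ℕ)) : Prop :=
  ∃ i j : ℕ, (i, j) ∈ D ∧ (i + 1, j) ∉ D ∧ (i, j + 1) ∉ D ∧ (i + 1, j + 1) ∉ D ∧
    (i + 1, j + 1) ∈ lam ∧ D' = insert (i + 1, j + 1) (D.erase (i, j))

/-- `D` is an excited diagram of `lam/mu`. -/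
def IsExcited (lam mu D : Finset (ℕ × ℕ)) : Prop :=
  Relation.ReflTransGen (ExcitedStep lam) mu D

/-- `P` is a pleasant diagram of `lam/mu`: a subset of `lam \ D` for an excited diagram `D`. -/
def IsPleasant (lam mu : Finset (ℕ × ℕ)) (P : Finset (ℕ × ℕ)) : Prop :=
  ∃ D, IsExcited lam mu D ∧ P ⊆ lam \ D

/-- `p(lam/mu)`, the number of pleasant diagrams of `lam/mu`. -/
def pleasantCount (lam mu : Finset (ℕ × ℕ)) : ℕ :=
  Set.ncard {P : Finset (ℕ × ℕ) | IsPleasant lam mu P}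

/-- A reverse plane partition on the skew shape `shape`: a filling by nonnegative
integers (vanishing off the shape) weakly increasing along rows and columns. -/
def IsRPP (shape : Finset (ℕ × ℕ)) (f : ℕ × ℕ → ℕ) : Prop :=
  (∀ c, c ∉ shape → f c = 0) ∧
    (∀ i j : ℕ, (i, j) ∈ shape → (i, j + 1) ∈ shape → f (i, j) ≤ f (i, j + 1)) ∧
    ∀ i j : ℕ, (i, j) ∈ shape → (i + 1, j) ∈ shape → f (i, j) ≤ f (i + 1, j)

/-- `∑_{π ∈ RPP(shape)} q^{|π|}` as a formal power series in `q`. -/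
def rppGF (shape : Finset (ℕ × ℕ)) : PowerSeries ℚ :=
  PowerSeries.mk fun N =>
    (Set.ncard {f : ℕ × ℕ → ℕ | IsRPP shape f ∧ ∑ c ∈ shape, f c = N} : ℚ)

/-- `(q; q)_m = ∏_{i=1}^m (1 - q^i)` as a formal power series. -/
def pochPS (m : ℕ) : PowerSeries ℚ :=
  ∏ i ∈ Finset.Icc 1 m, (1 - (PowerSeries.X : PowerSeries ℚ) ^ i)

/-- `E*_N(q) = ∑_{π ∈ Alt_N} q^{maj(κ_N π⁻¹)}` as a formal power series. -/
def EstarPS (N : ℕ) : PowerSeries ℚ :=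
  ∑ π ∈ altPerms N, (PowerSeries.X : PowerSeries ℚ) ^ majKappaInv N π

/-- `E*_m(q)/(q;q)_m` for `m ≥ 0`, and `0` for `m < 0`. -/
def EstarEntry (m : ℤ) : PowerSeries ℚ :=
  if m < 0 then 0 else EstarPS m.toNat * (pochPS m.toNat)⁻¹

/-- The Gaussian binomial coefficient `[N choose M]_q` as a formal power series. -/
def gaussPS (N M : ℕ) : PowerSeries ℚ :=
  pochPS N * (pochPS M * pochPS (N - M))⁻¹

/-! Write each valley weight as `w̃t = 1 + (w̃t - 1)` and expand: `wt_V(D)` becomes a sum over the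
ways of marking some valleys of `D`, a marked valley having weight `w̃t - 1`. All paths are extended
below the `x`-axis to a common time span, and the states (height, mark) are compared
lexicographically. A marked valley lies slightly above an unmarked point of the same height, so two
marked paths cannot cross without sharing a state, and the Lindström–Gessel–Viennot lemma turns the
determinant into a sum over families of marked paths that stay strictly increasing. Forgetting the
marks leaves the families `D₁ ≤ ⋯ ≤ D_k`: wherever two consecutive paths meet, the upper one has a
valley and the lower one has not, so exactly the mark of the upper one is forced, and the valley
contributes `w̃t - 1 = w̃t (1 - 1/w̃t)` instead of `w̃t`. -/

section Automaton

open scoped Relator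

variable {S A R : Type*}

/-- The state reached from `a` by the automaton with transition function `next` after reading the
first `t` letters of `w`; it no longer changes once `w` is exhausted. -/
def run (next : S → A → S) (a : S) {T : ℕ} (w : Fin T → A) : ℕ → S
  | 0 => a
  | t + 1 => if h : t < T then next (run next a w t) (w ⟨t, h⟩) else run next a w t

theorem run_cons (next : S → A → S) (a : S) {T : ℕ} (s : A) (w : Fin T → A) (t : ℕ) :
    run next a (Fin.cons s w : Fin (T + 1) → A) (t + 1) = run next (next a s) w t := by
  induction t with
  | zero => simp [run]
  | succ t ih =>
    rw [run, ih, run]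
    simp only [add_lt_add_iff_right]
    rfl

theorem sum_cons {M : Type*} [AddCommMonoid M] [Fintype A] {T : ℕ} (f : (Fin (T + 1) → A) → M) :
    ∑ w, f w = ∑ s : A, ∑ w : Fin T → A, f (Fin.cons s w : Fin (T + 1) → A) := by
  rw [← Fintype.sum_prod_type']
  exact (Equiv.sum_comp (Fin.consEquiv fun _ => A) f).symm

theorem sum_pi_cons {ι M : Type*} [Fintype ι] [DecidableEq ι] [AddCommMonoid M] [Fintype A]
    {T : ℕ} (f : (ι → Fin (T + 1) → A) → M) :
    ∑ w, f w = ∑ s : ι → A, ∑ w : ι → Fin T → A,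
      f fun i => (Fin.cons (s i) (w i) : Fin (T + 1) → A) := by
  rw [← Fintype.sum_prod_type']
  exact (Equiv.sum_comp ((Equiv.arrowProdEquivProdArrow ι (fun _ => A)
    (fun _ => Fin T → A)).symm.trans
      (Equiv.piCongrRight fun _ => Fin.consEquiv fun _ => A)) f).symm

section Weight

variable [CommSemiring R]

/-- The weight of the run on `w` from `a` started at time `x`, where `τ t a s` is the weight of
reading the letter `s` in state `a` at time `t`. -/
def runWt (next : S → A → S) (τ : ℕ → S → A → R) (x : ℕ) (a : S) {T : ℕ} (w : Fin T → A) : R :=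
  ∏ t : Fin T, τ (x + t) (run next a w t) (w t)

theorem runWt_cons (next : S → A → S) (τ : ℕ → S → A → R) (x : ℕ) (a : S) {T : ℕ}
    (s : A) (w : Fin T → A) :
    runWt next τ x a (Fin.cons s w : Fin (T + 1) → A) =
      τ x a s * runWt next τ (x + 1) (next a s) w := by
  rw [runWt, Fin.prod_univ_succ, runWt]
  refine congrArg _ (prod_congr rfl fun t _ => ?_)
  rw [Fin.cons_succ, Fin.val_succ, run_cons, add_right_comm, add_assoc]

/-- The weighted number of words of length `T` leading from state `a` to state `b`. -/
def runSum [Fintype A] [DecidableEq S] (next : S → A → S) (τ : ℕ → S → A → R) (x T : ℕ) (a b : S) :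
    R :=
  ∑ w : Fin T → A, if run next a w T = b then runWt next τ x a w else 0

theorem runSum_zero [Fintype A] [DecidableEq S] (next : S → A → S) (τ : ℕ → S → A → R) (x : ℕ)
    (a b : S) : runSum next τ x 0 a b = if a = b then 1 else 0 := by
  simp [runSum, run, runWt]

theorem runSum_succ [Fintype A] [DecidableEq S] (next : S → A → S) (τ : ℕ → S → A → R) (x T : ℕ)
    (a b : S) :
    runSum next τ x (T + 1) a b = ∑ s, τ x a s * runSum next τ (x + 1) T (next a s) b := by
  simp only [runSum, sum_cons, run_cons, runWt_cons, mul_sum, mul_ite, mul_zero]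

end Weight

section Ordered

variable {k : ℕ}

/-- The family `a` increases with respect to the relation `r`. -/
def IsIncreasing (r : S → S → Prop) (a : Fin k → S) : Prop :=
  ((· < ·) ⇒ r) a a

theorem isIncreasing_iff_forall_succ {r : S → S → Prop} [IsTrans S r] {a : Fin k → S} :
    IsIncreasing r a ↔ ∀ i j : Fin k, (i : ℕ) + 1 = j → r (a i) (a j) := by
  refine ⟨fun h i j hij => h (Fin.lt_def.2 (by omega)), fun h => ?_⟩
  cases k with
  | zero => exact fun i => i.elim0
  | succ k => exact (Fin.liftFun_iff_succ r).2 fun i => h _ _ (by simp)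

/-- The runs from the states `a i` on the words `w i` are in increasing order at all times. -/
def StaysIncreasing (r : S → S → Prop) (next : S → A → S) {T : ℕ} (a : Fin k → S)
    (w : Fin k → Fin T → A) : Prop :=
  ∀ t ≤ T, IsIncreasing r fun i => run next (a i) (w i) t

theorem staysIncreasing_cons {r : S → S → Prop} {next : S → A → S} {T : ℕ} {a : Fin k → S}
    {s : Fin k → A} {w : Fin k → Fin T → A} :
    StaysIncreasing r next a (fun i => (Fin.cons (s i) (w i) : Fin (T + 1) → A)) ↔
      IsIncreasing r a ∧ StaysIncreasing r next (fun i => next (a i) (s i)) w := by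
  constructor
  · refine fun h => ⟨h 0 (Nat.zero_le _), fun t ht => ?_⟩
    simpa only [run_cons] using h (t + 1) (Nat.succ_le_succ ht)
  · rintro ⟨h₀, h⟩ (_ | t) ht
    · exact h₀
    · simpa only [run_cons] using h t (Nat.le_of_succ_le_succ ht)

/-- The weighted number of families of words of length `T` whose runs lead from `a i` to `b i` and
stay in increasing order. -/
def increasingRunSum [CommSemiring R] [Fintype A] [DecidableEq S] (r : S → S → Prop)
    (next : S → A → S) (τ : ℕ → S → A → R) (x T : ℕ) (a b : Fin k → S) : R :=
  ∑ w : Fin k → Fin T → A,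
    if (∀ i, run next (a i) (w i) T = b i) ∧ StaysIncreasing r next a w
    then ∏ i, runWt next τ x (a i) (w i) else 0

variable [CommSemiring R] [Fintype A] [DecidableEq S] (r : S → S → Prop) (next : S → A → S)
  (τ : ℕ → S → A → R) (x : ℕ)

theorem increasingRunSum_zero {a : Fin k → S} (ha : IsIncreasing r a) (b : Fin k → S) :
    increasingRunSum r next τ x 0 a b = if a = b then 1 else 0 := by
  simp [increasingRunSum, StaysIncreasing, run, runWt, ha, funext_iff]

theorem increasingRunSum_eq_zero {a : Fin k → S} (ha : ¬ IsIncreasing r a) (T : ℕ)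
    (b : Fin k → S) : increasingRunSum r next τ x T a b = 0 :=
  sum_eq_zero fun _ _ => if_neg fun h => ha (h.2 0 T.zero_le)

theorem increasingRunSum_succ {a : Fin k → S} (ha : IsIncreasing r a) (T : ℕ) (b : Fin k → S) :
    increasingRunSum r next τ x (T + 1) a b = ∑ s : Fin k → A, (∏ i, τ x (a i) (s i)) *
      increasingRunSum r next τ (x + 1) T (fun i => next (a i) (s i)) b := by
  simp only [increasingRunSum, sum_pi_cons, staysIncreasing_cons, run_cons, runWt_cons,
    prod_mul_distrib, ha, true_and, mul_sum, mul_ite, mul_zero]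

end Ordered

section Determinant

variable [CommRing R] {k : ℕ}

theorem perm_eq_one_of_comp_eq {r : S → S → Prop} [Std.Asymm r] {a b : Fin k → S}
    (ha : IsIncreasing r a) (hb : IsIncreasing r b) {σ : Equiv.Perm (Fin k)}
    (h : ∀ i, a (σ i) = b i) : σ = 1 := by
  have hmono : StrictMono σ := fun i j hij => by
    have hr : r (a (σ i)) (a (σ j)) := by simpa only [h] using hb hij
    rcases lt_trichotomy (σ i) (σ j) with hlt | heq | hgt
    · exact hlt
    · exact absurd (σ.injective heq) hij.ne
    · exact absurd (ha hgt) (asymm hr)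
  ext i
  rw [StrictMono.range_inj hmono strictMono_id |>.1 (by simp), id, Equiv.Perm.one_apply]

theorem det_ite_eq [DecidableEq S] {r : S → S → Prop} [Std.Asymm r] {a b : Fin k → S}
    (ha : IsIncreasing r a) (hb : IsIncreasing r b) :
    (Matrix.of fun i j => if a i = b j then (1 : R) else 0).det = if a = b then 1 else 0 := by
  have hprod (σ : Equiv.Perm (Fin k)) :
      ∏ i, (Matrix.of fun i j => if a i = b j then (1 : R) else 0) (σ i) i =
        if σ = 1 ∧ a = b then 1 else 0 := by
    simp only [Matrix.of_apply, prod_ite_zero, mem_univ, true_imp_iff, prod_const_one]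
    refine if_congr ⟨fun h => ?_, ?_⟩ rfl rfl
    · obtain rfl := perm_eq_one_of_comp_eq ha hb h
      exact ⟨rfl, funext h⟩
    · rintro ⟨rfl, rfl⟩ i
      rfl
  simp_rw [Matrix.det_apply, hprod, ite_and, smul_ite, smul_zero]
  simp

theorem det_sum_mul [Fintype A] (c : Fin k → A → R) (v : Fin k → A → Fin k → R) :
    (Matrix.of fun i j => ∑ s, c i s * v i s j).det =
      ∑ s : Fin k → A, (∏ i, c i (s i)) * (Matrix.of fun i j => v i (s i) j).det := by
  have hrows : (Matrix.of fun i j => ∑ s, c i s * v i s j) = fun i => ∑ s, c i s • v i s := by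
    ext i j
    simp
  rw [hrows]
  refine ((Matrix.detRowAlternating (R := R) (n := Fin k)).toMultilinearMap.map_sum
    fun i s => c i s • v i s).trans (sum_congr rfl fun s _ => ?_)
  exact MultilinearMap.map_smul_univ _ (fun i => c i (s i)) fun i => v i (s i)

-- The Lindström–Gessel–Viennot lemma.  Expanding the rows one step at a time replaces the usual
-- sign-reversing involution: when two paths meet, two rows of the remaining determinant agree.
theorem det_runSum [Fintype A] [DecidableEq S] {r : S → S → Prop} [Std.Asymm r]
    {next : S → A → S} {τ : ℕ → S → A → R}
    (hplanar : ∀ x a a' s s', r a a' → τ x a s ≠ 0 → τ x a' s' ≠ 0 →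
      next a s = next a' s' ∨ r (next a s) (next a' s'))
    {b : Fin k → S} (hb : IsIncreasing r b) (T x : ℕ) {a : Fin k → S} (ha : IsIncreasing r a) :
    (Matrix.of fun i j => runSum next τ x T (a i) (b j)).det =
      increasingRunSum r next τ x T a b := by
  induction T generalizing x a with
  | zero => simp only [runSum_zero, det_ite_eq ha hb, increasingRunSum_zero r next τ x ha]
  | succ T ih =>
    simp only [runSum_succ]
    rw [det_sum_mul (fun i => τ x (a i)) fun i s j => runSum next τ (x + 1) T (next (a i) s) (b j),
      increasingRunSum_succ r next τ x ha]
    refine sum_congr rfl fun s _ => ?_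
    by_cases hzero : ∏ i, τ x (a i) (s i) = 0
    · rw [hzero, zero_mul, zero_mul]
    by_cases hinc : IsIncreasing r fun i => next (a i) (s i)
    · rw [ih (x + 1) hinc]
    rw [increasingRunSum_eq_zero r next τ _ hinc]
    have hτ (i) : τ x (a i) (s i) ≠ 0 := fun hi => hzero (prod_eq_zero (mem_univ i) hi)
    simp only [IsIncreasing, Relator.LiftFun, not_forall] at hinc
    obtain ⟨i, j, hij, hr⟩ := hinc
    have hmeet : next (a i) (s i) = next (a j) (s j) :=
      (hplanar x _ _ _ _ (ha hij) (hτ i) (hτ j)).resolve_right hr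
    rw [Matrix.det_zero_of_row_eq hij.ne (funext fun l => by simp only [Matrix.of_apply, hmeet])]

end Determinant

end Automaton

section Height

variable {T : ℕ} (a : ℤ) (u : Fin T → Bool)

theorem stepVal_eq_one_iff (t : Fin T) : stepVal u t = 1 ↔ u t = true := by
  cases h : u t <;> simp [stepVal, h]

theorem stepVal_eq_neg_one_iff (t : Fin T) : stepVal u t = -1 ↔ u t = false := by
  cases h : u t <;> simp [stepVal, h]

theorem stepVal_eq_or {t : ℕ} (ht : t < T) : stepVal u t = 1 ∨ stepVal u t = -1 := by
  rw [stepVal, dif_pos ht]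
  split_ifs <;> simp

theorem stepVal_of_le {t : ℕ} (ht : T ≤ t) : stepVal u t = 0 :=
  dif_neg ht.not_gt

theorem pht_zero : pht u 0 = 0 :=
  sum_range_zero _

theorem pht_succ (t : ℕ) : pht u (t + 1) = pht u t + stepVal u t :=
  sum_range_succ _ t

/-- The height at time `t` of the path with steps `u` that starts at height `a`. -/
def height (t : ℕ) : ℤ := a + pht u t

theorem height_zero : height a u 0 = a := by
  rw [height, pht_zero, add_zero]

theorem height_succ (t : ℕ) : height a u (t + 1) = height a u t + stepVal u t := by
  rw [height, height, pht_succ, add_assoc]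

theorem height_emod_two {t : ℕ} (ht : t ≤ T) : height a u t % 2 = (a + t) % 2 := by
  induction t with
  | zero => simp [height_zero]
  | succ t ih =>
    have := ih (by omega)
    rw [height_succ]
    rcases stepVal_eq_or u ht with h | h <;> omega

end Height

section MarkedPath

variable {F : Type*} [Field F] (wt wte : ℤ × ℕ → F) (N : ℕ) {T : ℕ}

/-- The lattice point at height `y` reached at time `t` by a path starting at abscissa `-N`; a
negative height is truncated to `0`. -/
def latticePt (t : ℕ) (y : ℤ) : ℤ × ℕ := ((t : ℤ) - N, y.toNat)

/-- The weight of the point at height `y` reached at time `t`; points below the `x`-axis have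
weight `1`. -/
def pointWt (t : ℕ) (y : ℤ) : F :=
  if 0 ≤ y then wt (latticePt N t y) else 1

/-- The weight of the points of a path, except its endpoint. -/
def pathWt (a : ℤ) (u : Fin T → Bool) : F :=
  ∏ t : Fin T, pointWt wt N t (height a u t)

/-- The valley weight of the point of a path at which its step `t` ends. -/
def reachedWt (a : ℤ) (u : Fin T → Bool) (t : ℕ) : F :=
  wte (latticePt N (t + 1) (height a u (t + 1)))

/-- The step `t` of a path descends from positive height into a valley. -/
def IsValleyStep (a : ℤ) (u : Fin T → Bool) (t : ℕ) : Prop :=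
  stepVal u t = -1 ∧ stepVal u (t + 1) = 1 ∧ 1 ≤ height a u t

/-- The path leads from height `a` to height `b`, and below the `x`-axis it only goes up before
time `N`, and only goes down afterwards. -/
def IsAdmissible (a b : ℤ) (u : Fin T → Bool) : Prop :=
  height a u T = b ∧ ∀ t < T, (stepVal u t = 1 → 0 ≤ height a u t ∨ t < N) ∧
    (stepVal u t = -1 → 1 ≤ height a u t ∨ N ≤ t)

/-- The transition function of the automaton reading paths with marked valleys: a state is a height
together with the mark of the current point, a letter is a step together with the mark of the point
it reaches. -/
def markStep (a : ℤ × Bool) (l : Bool × Bool) : ℤ × Bool :=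
  (a.1 + if l.1 then 1 else -1, l.2)

/-- The letter `l` may be read in state `a` at time `t`: only valleys are marked, and the path
remains admissible. -/
def IsLegal (t : ℕ) (a : ℤ × Bool) (l : Bool × Bool) : Prop :=
  (a.2 = true → l.1 = true) ∧ (l.2 = true → l.1 = false ∧ 1 ≤ a.1) ∧
    (l.1 = true → 0 ≤ a.1 ∨ t < N) ∧ (l.1 = false → 1 ≤ a.1 ∨ N ≤ t)

/-- The weight of a letter: a marked valley contributes its valley weight minus one. -/
def markWt (t : ℕ) (a : ℤ × Bool) (l : Bool × Bool) : F :=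
  if IsLegal N t a l then
    pointWt wt N t a.1 * if l.2 then wte (latticePt N (t + 1) (markStep a l).1) - 1 else 1
  else 0

/-- The lexicographic order on the states whose heights have equal parity: a marked point lies
slightly higher. -/
def markLT (a b : ℤ × Bool) : Prop :=
  a.1 % 2 = b.1 % 2 ∧ toLex a < toLex b

instance : IsTrans (ℤ × Bool) markLT :=
  ⟨fun _ _ _ hab hbc => ⟨hab.1.trans hbc.1, hab.2.trans hbc.2⟩⟩

instance : Std.Asymm markLT :=
  ⟨fun _ _ hab hba => hab.2.asymm hba.2⟩

theorem markLT_iff {a b : ℤ × Bool} : markLT a b ↔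
    a.1 % 2 = b.1 % 2 ∧ (a.1 < b.1 ∨ a.1 = b.1 ∧ a.2 = false ∧ b.2 = true) := by
  rw [markLT, Prod.Lex.toLex_lt_toLex, Bool.lt_iff]

variable {N} in
theorem IsLegal.markStep_eq_or_markLT {t : ℕ} {a a' : ℤ × Bool} {l l' : Bool × Bool}
    (hl : IsLegal N t a l) (hl' : IsLegal N t a' l') (h : markLT a a') :
    markStep a l = markStep a' l' ∨ markLT (markStep a l) (markStep a' l') := by
  obtain ⟨y, m⟩ := a
  obtain ⟨y', m'⟩ := a'
  obtain ⟨s, μ⟩ := l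
  obtain ⟨s', μ'⟩ := l'
  obtain ⟨hup, hmark, -⟩ := hl
  obtain ⟨hup', hmark', -⟩ := hl'
  simp only [markStep, markLT_iff, Prod.mk.injEq] at *
  cases m <;> cases m' <;> cases s <;> cases s' <;> cases μ <;> cases μ' <;> simp at * <;> omega

variable {wt wte N} in
theorem isLegal_of_markWt_ne_zero {t : ℕ} {a : ℤ × Bool} {l : Bool × Bool}
    (h : markWt wt wte N t a l ≠ 0) : IsLegal N t a l :=
  (ite_ne_right_iff.1 h).1

/-- The mark of the point reached at time `t`; the starting point is never marked. -/
def markAt (m : Fin T → Bool) : ℕ → Bool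
  | 0 => false
  | t + 1 => if h : t < T then m ⟨t, h⟩ else false

theorem markAt_succ (m : Fin T → Bool) (t : Fin T) : markAt m (t + 1) = m t :=
  dif_pos t.2

theorem run_markStep (a : ℤ) (u m : Fin T → Bool) {t : ℕ} (ht : t ≤ T) :
    run markStep (a, false) (fun j => (u j, m j)) t = (height a u t, markAt m t) := by
  induction t with
  | zero => simp [run, height_zero, markAt]
  | succ t ih =>
    have ht' : t < T := ht
    rw [run, dif_pos ht', ih ht'.le, height_succ, stepVal, dif_pos ht', markAt, dif_pos ht',
      markStep]

theorem runWt_markStep (a : ℤ) (u m : Fin T → Bool) :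
    runWt markStep (markWt wt wte N) 0 (a, false) (fun t => (u t, m t)) =
      if ∀ t : Fin T, IsLegal N t (height a u t, markAt m t) (u t, m t) then
        pathWt wt N a u * ∏ t : Fin T, if m t then reachedWt wte N a u t - 1 else 1
      else 0 := by
  have hstep (t : Fin T) :
      (markStep (height a u t, markAt m t) (u t, m t)).1 = height a u (t + 1) := by
    simp [markStep, height_succ, stepVal]
  simp only [runWt, zero_add, run_markStep a u m (Fin.is_le' (a := _)), markWt, hstep,
    prod_ite_zero, mem_univ, true_imp_iff, prod_mul_distrib, pathWt, reachedWt]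

variable {a b : ℤ} {u m : Fin T → Bool}

theorem stepVal_of_markAt (hm : ∀ t : Fin T, m t = true → IsValleyStep a u t) {t : ℕ}
    (ht : markAt m t = true) : stepVal u t = 1 := by
  cases t with
  | zero => cases ht
  | succ t =>
    rw [markAt] at ht
    split_ifs at ht
    exact (hm _ ht).2.1

theorem forall_isLegal_iff :
    ((height a u T, markAt m T) = (b, false) ∧
        ∀ t : Fin T, IsLegal N t (height a u t, markAt m t) (u t, m t)) ↔
      IsAdmissible N a b u ∧ ∀ t : Fin T, m t = true → IsValleyStep a u t := by
  simp only [Prod.mk.injEq, IsLegal, ← stepVal_eq_one_iff u, ← stepVal_eq_neg_one_iff u]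
  constructor
  · rintro ⟨⟨hend, hmark⟩, hlegal⟩
    refine ⟨⟨hend, fun t ht => (hlegal ⟨t, ht⟩).2.2⟩, fun t ht => ?_⟩
    obtain ⟨hdown, hpos⟩ := (hlegal t).2.1 ht
    refine ⟨hdown, ?_, hpos⟩
    rw [← markAt_succ m] at ht
    obtain hT | hT : (t : ℕ) + 1 < T ∨ (t : ℕ) + 1 = T := by omega
    · exact (hlegal ⟨t + 1, hT⟩).1 ht
    · rw [hT, hmark] at ht
      cases ht
  · rintro ⟨⟨hend, hstep⟩, hm⟩
    refine ⟨⟨hend, ?_⟩, fun t => ⟨stepVal_of_markAt hm, fun ht => ?_, hstep t t.2⟩⟩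
    · by_contra hmark
      have := stepVal_of_markAt hm (Bool.eq_true_of_not_eq_false hmark)
      rw [stepVal_of_le u le_rfl] at this
      omega
    · exact ⟨(hm t ht).1, (hm t ht).2.2⟩

theorem ite_runWt_markStep (wt wte : ℤ × ℕ → F) (N : ℕ) (a b : ℤ) (u m : Fin T → Bool) :
    (if run markStep (a, false) (fun t => (u t, m t)) T = (b, false) then
      runWt markStep (markWt wt wte N) 0 (a, false) (fun t => (u t, m t)) else 0) =
    if IsAdmissible N a b u ∧ ∀ t : Fin T, m t = true → IsValleyStep a u t then
      pathWt wt N a u * ∏ t : Fin T, if m t then reachedWt wte N a u t - 1 else 1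
    else 0 := by
  rw [run_markStep a u m le_rfl, runWt_markStep, ← ite_and, if_congr (forall_isLegal_iff N) rfl rfl]

end MarkedPath

section Marking

variable {F : Type*} [Field F]

theorem sum_arrow_prod {ι A B M : Type*} [Fintype ι] [DecidableEq ι] [Fintype A] [Fintype B]
    [AddCommMonoid M] (f : (ι → A × B) → M) :
    ∑ w, f w = ∑ u : ι → A, ∑ m : ι → B, f fun i => (u i, m i) := by
  rw [← Fintype.sum_prod_type']
  exact (Equiv.sum_comp (Equiv.arrowProdEquivProdArrow ι (fun _ => A) (fun _ => B)).symm f).symm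

theorem sum_arrow_arrow_prod {ι κ A B M : Type*} [Fintype ι] [DecidableEq ι] [Fintype κ]
    [DecidableEq κ] [Fintype A] [Fintype B] [AddCommMonoid M] (f : (ι → κ → A × B) → M) :
    ∑ w, f w = ∑ u : ι → κ → A, ∑ m : ι × κ → B, f fun i t => (u i t, m (i, t)) := by
  rw [← Equiv.sum_comp (Equiv.curry ι κ (A × B)), sum_arrow_prod,
    ← Equiv.sum_comp (Equiv.curry ι κ A)]
  rfl

-- With `C` the forced and `P` the permitted marks: a free permitted index contributes
-- `(c i - 1) + 1`, a forced one contributes `c i - 1 = c i * (1 - (c i)⁻¹)`.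
theorem sum_prod_sub_one {ι : Type*} [Fintype ι] [DecidableEq ι] {C P : ι → Prop} {c : ι → F}
    (hCP : ∀ i, C i → P i) (hc : ∀ i, C i → c i ≠ 0) :
    (∑ m : ι → Bool, if (∀ i, C i → m i = true) ∧ ∀ i, m i = true → P i then
        ∏ i, (if m i then c i - 1 else 1) else 0) =
      (∏ i, if P i then c i else 1) * ∏ i, if C i then 1 - (c i)⁻¹ else 1 := by
  have hlocal (i : ι) : ((if P i then c i else 1) * if C i then 1 - (c i)⁻¹ else 1) =
      ∑ e : Bool, if (C i → e = true) ∧ (e = true → P i) then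
        (if e then c i - 1 else 1) else 0 := by
    by_cases hC : C i
    · simp [hC, hCP i hC, mul_sub, hc i hC]
    · by_cases hP : P i <;> simp [hC, hP]
  simp only [← prod_mul_distrib, hlocal, Fintype.prod_sum, prod_ite_zero, mem_univ, true_imp_iff,
    forall_and]

variable {T : ℕ} (wt wte : ℤ × ℕ → F) (N : ℕ)

/-- The weight `wt_V` of a path, in which only the valleys above the `x`-axis and the points other
than the endpoint are weighed. -/
def pathValleyWt (a : ℤ) (u : Fin T → Bool) : F :=
  pathWt wt N a u * ∏ t : Fin T, if IsValleyStep a u t then reachedWt wte N a u t else 1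

theorem runSum_markWt (a b : ℤ) :
    runSum markStep (markWt wt wte N) 0 T (a, false) (b, false) =
      ∑ u : Fin T → Bool, if IsAdmissible N a b u then pathValleyWt wt wte N a u else 0 := by
  rw [runSum, sum_arrow_prod]
  refine sum_congr rfl fun u _ => ?_
  have hmarks := sum_prod_sub_one (C := fun _ : Fin T => False) (P := fun t => IsValleyStep a u t)
    (c := fun t => reachedWt wte N a u t) (fun _ => False.elim) (fun _ => False.elim)
  simp only [false_imp_iff, implies_true, true_and, if_false, prod_const_one, mul_one] at hmarks
  simp only [ite_runWt_markStep, ite_and, sum_ite_irrel, sum_const_zero, pathValleyWt, ← hmarks,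
    mul_sum, mul_ite, mul_zero]

end Marking

section Family

variable {F : Type*} [Field F] {N T k : ℕ}

/-- The relation `≤` on paths of length `T`: the first path is weakly below the second one, and
the two paths share no step. -/
def IsWeaklyBelow (a₁ : ℤ) (u₁ : Fin T → Bool) (a₂ : ℤ) (u₂ : Fin T → Bool) : Prop :=
  (∀ t ≤ T, height a₁ u₁ t ≤ height a₂ u₂ t) ∧
    ∀ t < T, height a₁ u₁ t = height a₂ u₂ t → height a₁ u₁ (t + 1) ≠ height a₂ u₂ (t + 1)

/-- Consecutive paths of the family are related by `IsWeaklyBelow`. -/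
def IsOrdered (a : Fin k → ℤ) (u : Fin k → Fin T → Bool) : Prop :=
  ∀ i j : Fin k, (i : ℕ) + 1 = j → IsWeaklyBelow (a i) (u i) (a j) (u j)

/-- The `i`-th path of the family meets its predecessor at time `t`. -/
def Touches (a : Fin k → ℤ) (u : Fin k → Fin T → Bool) (i : Fin k) (t : ℕ) : Prop :=
  ∃ j : Fin k, (j : ℕ) + 1 = i ∧ height (a j) (u j) t = height (a i) (u i) t

/-- The product of the factors `1 - 1 / w̃t(p)` over the contacts of consecutive paths. -/
def contactWt (wte : ℤ × ℕ → F) (N : ℕ) (a : Fin k → ℤ) (u : Fin k → Fin T → Bool) : F :=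
  ∏ i, ∏ t : Fin T, if Touches a u i (t + 1) then 1 - (reachedWt wte N (a i) (u i) t)⁻¹ else 1

-- Below the axis an admissible path has no choice, so two such paths meeting there share a step.
theorem IsWeaklyBelow.isValleyStep {a₁ a₂ b₁ b₂ : ℤ} {u₁ u₂ : Fin T → Bool}
    (h : IsWeaklyBelow a₁ u₁ a₂ u₂) (h₁ : IsAdmissible N a₁ b₁ u₁) (h₂ : IsAdmissible N a₂ b₂ u₂)
    (hb : b₁ ≠ b₂) {t : ℕ} (ht : t < T)
    (hmeet : height a₁ u₁ (t + 1) = height a₂ u₂ (t + 1)) : IsValleyStep a₂ u₂ t := by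
  obtain ⟨hle, hshare⟩ := h
  have ht' : t + 1 < T := by
    refine lt_of_le_of_ne ht fun hT => hb ?_
    subst hT
    rw [← h₁.1, ← h₂.1, hmeet]
  have hle₀ := hle t ht.le
  have hle₂ := hle (t + 1 + 1) ht'
  have hshare₀ := hshare t ht
  have hshare₁ := hshare (t + 1) ht' hmeet
  have hup₁ := (h₁.2 (t + 1) ht').1
  have hup₂ := (h₂.2 (t + 1) ht').1
  have hdown := (h₂.2 t ht).2
  simp only [IsValleyStep, height_succ] at *
  rcases stepVal_eq_or u₁ ht with e₁ | e₁ <;> rcases stepVal_eq_or u₂ ht with e₂ | e₂ <;>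
    rcases stepVal_eq_or u₁ ht' with e₁' | e₁' <;> rcases stepVal_eq_or u₂ ht' with e₂' | e₂' <;>
    omega

-- A path touching one from above comes down to the contact and leaves it upwards, a path touching
-- from below does the opposite; so a contact is consistent with `markLT` only if it is marked.
theorem forall_markLT_iff {a₁ a₂ : ℤ} {u₁ u₂ m₁ m₂ : Fin T → Bool}
    (hpar : a₁ % 2 = a₂ % 2) (ha : a₁ < a₂)
    (hm₁ : ∀ t : Fin T, m₁ t = true → IsValleyStep a₁ u₁ t)
    (hm₂ : ∀ t : Fin T, m₂ t = true → IsValleyStep a₂ u₂ t) :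
    (∀ t ≤ T, markLT (height a₁ u₁ t, markAt m₁ t) (height a₂ u₂ t, markAt m₂ t)) ↔
      IsWeaklyBelow a₁ u₁ a₂ u₂ ∧
        ∀ t : Fin T, height a₁ u₁ (t + 1) = height a₂ u₂ (t + 1) → m₂ t = true := by
  simp only [markLT_iff]
  constructor
  · refine fun h => ⟨⟨fun t ht => ?_, fun t ht heq heq' => ?_⟩, fun t heq => ?_⟩
    · have := (h t ht).2
      omega
    · have hmark : markAt m₂ t = true := ((h t ht.le).2.resolve_left heq.not_lt).2.2
      have hmark' : markAt m₂ (t + 1) = true := ((h (t + 1) ht).2.resolve_left heq'.not_lt).2.2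
      have hup : stepVal u₂ t = 1 := stepVal_of_markAt hm₂ hmark
      have hdown : stepVal u₂ t = -1 := (hm₂ ⟨t, ht⟩ (markAt_succ m₂ ⟨t, ht⟩ ▸ hmark')).1
      omega
    · rw [← markAt_succ m₂]
      exact ((h (t + 1) t.2).2.resolve_left heq.not_lt).2.2
  · rintro ⟨⟨hle, hshare⟩, hmark⟩ t ht
    refine ⟨by rw [height_emod_two _ _ ht, height_emod_two _ _ ht]; omega, ?_⟩
    refine (hle t ht).lt_or_eq.imp_right fun heq => ⟨heq, ?_⟩
    cases t with
    | zero => rw [height_zero, height_zero] at heq; exact absurd heq ha.ne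
    | succ t =>
      have hmark₂ : m₂ ⟨t, ht⟩ = true := hmark ⟨t, ht⟩ heq
      have hdown₂ : stepVal u₂ t = -1 := (hm₂ _ hmark₂).1
      refine ⟨Bool.eq_false_of_not_eq_true fun hmark₁ => ?_, ?_⟩
      · rw [markAt_succ m₁ ⟨t, ht⟩] at hmark₁
        have hdown₁ : stepVal u₁ t = -1 := (hm₁ _ hmark₁).1
        refine hshare t ht ?_ heq
        rw [height_succ, height_succ] at heq
        omega
      · rw [markAt_succ m₂ ⟨t, ht⟩, hmark₂]

theorem staysIncreasing_markLT_iff {a : Fin k → ℤ} {u m : Fin k → Fin T → Bool}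
    (ha : StrictMono a) (hpar : ∀ i j, a i % 2 = a j % 2)
    (hm : ∀ i (t : Fin T), m i t = true → IsValleyStep (a i) (u i) t) :
    StaysIncreasing markLT markStep (fun i => (a i, false)) (fun i t => (u i t, m i t)) ↔
      IsOrdered a u ∧ ∀ i (t : Fin T), Touches a u i (t + 1) → m i t = true := by
  have hpair (i j : Fin k) (hij : (i : ℕ) + 1 = j) :=
    forall_markLT_iff (hpar i j) (ha (Fin.lt_def.2 hij.le)) (hm i) (hm j)
  calc StaysIncreasing markLT markStep (fun i => (a i, false)) (fun i t => (u i t, m i t))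
    _ ↔ ∀ i j : Fin k, (i : ℕ) + 1 = j → ∀ t ≤ T,
          markLT (height (a i) (u i) t, markAt (m i) t) (height (a j) (u j) t, markAt (m j) t) := by
      refine ⟨fun h i j hij t ht => ?_, fun h t ht => ?_⟩
      · simpa only [run_markStep _ _ _ ht] using isIncreasing_iff_forall_succ.1 (h t ht) i j hij
      · refine isIncreasing_iff_forall_succ.2 fun i j hij => ?_
        simpa only [run_markStep _ _ _ ht] using h i j hij t ht
    _ ↔ ∀ i j : Fin k, (i : ℕ) + 1 = j → IsWeaklyBelow (a i) (u i) (a j) (u j) ∧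
          ∀ t : Fin T, height (a i) (u i) (t + 1) = height (a j) (u j) (t + 1) → m j t = true :=
      forall₂_congr fun i j => forall_congr' (hpair i j)
    _ ↔ _ :=
      ⟨fun h => ⟨fun i j hij => (h i j hij).1, fun j t ⟨i, hij, heq⟩ => (h i j hij).2 t heq⟩,
        fun h i j hij => ⟨h.1 i j hij, fun t heq => h.2 j t ⟨i, hij, heq⟩⟩⟩

theorem ite_prod_runWt_markStep (wt wte : ℤ × ℕ → F) {a : Fin k → ℤ} (ha : StrictMono a)
    (hpar : ∀ i j, a i % 2 = a j % 2) (b : Fin k → ℤ) (u m : Fin k → Fin T → Bool) :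
    (if (∀ i, run markStep (a i, false) (fun t => (u i t, m i t)) T = (b i, false)) ∧
        StaysIncreasing markLT markStep (fun i => (a i, false)) (fun i t => (u i t, m i t)) then
      ∏ i, runWt markStep (markWt wt wte N) 0 (a i, false) (fun t => (u i t, m i t)) else 0) =
    if (∀ i, IsAdmissible N (a i) (b i) (u i)) ∧ IsOrdered a u then
      if (∀ i (t : Fin T), Touches a u i (t + 1) → m i t = true) ∧
          ∀ i (t : Fin T), m i t = true → IsValleyStep (a i) (u i) t then
        (∏ i, pathWt wt N (a i) (u i)) *
          ∏ i, ∏ t : Fin T, if m i t then reachedWt wte N (a i) (u i) t - 1 else 1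
      else 0
    else 0 := by
  have hends : (if ∀ i, run markStep (a i, false) (fun t => (u i t, m i t)) T = (b i, false) then
        ∏ i, runWt markStep (markWt wt wte N) 0 (a i, false) (fun t => (u i t, m i t)) else 0) =
      if (∀ i, IsAdmissible N (a i) (b i) (u i)) ∧
          ∀ i (t : Fin T), m i t = true → IsValleyStep (a i) (u i) t then
        (∏ i, pathWt wt N (a i) (u i)) *
          ∏ i, ∏ t : Fin T, if m i t then reachedWt wte N (a i) (u i) t - 1 else 1
      else 0 := by
    have h := fun i => ite_runWt_markStep wt wte N (a i) (b i) (u i) (m i)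
    simpa only [prod_ite_zero, mem_univ, true_imp_iff, forall_and, prod_mul_distrib] using
      prod_congr rfl fun i (_ : i ∈ univ) => h i
  rw [if_congr and_comm rfl rfl, ite_and, hends, ← ite_and, ← ite_and]
  refine if_congr ?_ rfl rfl
  constructor
  · rintro ⟨hinc, hadm, hm⟩
    obtain ⟨hord, htouch⟩ := (staysIncreasing_markLT_iff ha hpar hm).1 hinc
    exact ⟨⟨hadm, hord⟩, htouch, hm⟩
  · rintro ⟨⟨hadm, hord⟩, htouch, hm⟩
    exact ⟨(staysIncreasing_markLT_iff ha hpar hm).2 ⟨hord, htouch⟩, hadm, hm⟩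

theorem increasingRunSum_markWt (wt : ℤ × ℕ → F) {wte : ℤ × ℕ → F} (hwte : ∀ p, wte p ≠ 0)
    {a b : Fin k → ℤ} (ha : StrictMono a) (hpar : ∀ i j, a i % 2 = a j % 2) (hb : StrictMono b) :
    increasingRunSum markLT markStep (markWt wt wte N) 0 T (fun i => (a i, false))
        (fun i => (b i, false)) =
      ∑ u : Fin k → Fin T → Bool,
        if (∀ i, IsAdmissible N (a i) (b i) (u i)) ∧ IsOrdered a u then
          (∏ i, pathValleyWt wt wte N (a i) (u i)) * contactWt wte N a u else 0 := by
  rw [increasingRunSum, sum_arrow_arrow_prod]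
  refine sum_congr rfl fun u _ => ?_
  simp only [ite_prod_runWt_markStep wt wte ha hpar b u, sum_ite_irrel, sum_const_zero]
  refine if_ctx_congr Iff.rfl (fun h => ?_) fun _ => rfl
  have hvalley : ∀ p : Fin k × Fin T, Touches a u p.1 (p.2 + 1) →
      IsValleyStep (a p.1) (u p.1) p.2 := by
    rintro ⟨j, t⟩ ⟨i, hij, hmeet⟩
    exact (h.2 i j hij).isValleyStep (h.1 i) (h.1 j) (hb (Fin.lt_def.2 hij.le)).ne t.2 hmeet
  have hmarks := sum_prod_sub_one hvalley
    (c := fun p => reachedWt wte N (a p.1) (u p.1) p.2) fun _ _ => hwte _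
  simp only [Prod.forall, Fintype.prod_prod_type] at hmarks
  simp only [pathValleyWt, contactWt, prod_mul_distrib, mul_assoc, ← hmarks, mul_sum, mul_ite,
    mul_zero]

end Family

section Extension

variable {F : Type*} [Field F] {N p q L T : ℕ}

/-- The path of length `T` consisting of `p` up-steps, the path `s`, and down-steps. -/
def extWord (p T : ℕ) {L : ℕ} (s : Fin L → Bool) : Fin T → Bool := fun t =>
  if (t : ℕ) < p then true else if h : (t : ℕ) - p < L then s ⟨t - p, h⟩ else false

theorem stepVal_extWord (p : ℕ) (s : Fin L → Bool) {t : ℕ} (ht : t < T) :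
    stepVal (extWord p T s) t =
      if t < p then 1 else if t < p + L then stepVal s (t - p) else -1 := by
  by_cases hp : t < p
  · simp [stepVal, extWord, ht, hp]
  · by_cases hL : t - p < L
    · have hL' : t < p + L := by omega
      simp [stepVal, extWord, ht, hp, hL, hL']
    · have hL' : ¬ t < p + L := by omega
      simp [stepVal, extWord, ht, hp, hL, hL']

theorem height_extWord_of_le (s : Fin L → Bool) {t : ℕ} (ht : t ≤ T) (htp : t ≤ p) :
    height (-p) (extWord p T s) t = t - p := by
  induction t with
  | zero => rw [height_zero]; simp
  | succ t ih =>
    rw [height_succ, ih (by omega) (by omega), stepVal_extWord p s ht,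
      if_pos (Nat.lt_of_succ_le htp)]
    push_cast
    ring

theorem height_extWord_add (s : Fin L → Bool) (hT : p + L ≤ T) {j : ℕ} (hj : j ≤ L) :
    height (-p) (extWord p T s) (p + j) = pht s j := by
  induction j with
  | zero => simp [height_extWord_of_le s (show p ≤ T by omega) le_rfl, pht_zero]
  | succ j ih =>
    rw [← add_assoc, height_succ, ih (by omega), stepVal_extWord p s (by omega),
      if_neg (by omega), if_pos (by omega), Nat.add_sub_cancel_left, pht_succ]

theorem height_extWord_of_ge {s : Fin L → Bool} (hs : IsDyck s) {t : ℕ} (hLt : p + L ≤ t)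
    (ht : t ≤ T) : height (-p) (extWord p T s) t = p + L - t := by
  induction t, hLt using Nat.le_induction with
  | base => rw [height_extWord_add s ht le_rfl, hs.2]; push_cast; ring
  | succ t hLt ih =>
    rw [height_succ, ih (by omega), stepVal_extWord p s ht, if_neg (by omega), if_neg (by omega)]
    push_cast
    ring

theorem height_extWord_nonneg {s : Fin L → Bool} (hs : IsDyck s) {t : ℕ} (hT : p + L ≤ T)
    (hpt : p ≤ t) (htL : t ≤ p + L) : 0 ≤ height (-p) (extWord p T s) t := by
  obtain ⟨j, rfl⟩ := Nat.exists_eq_add_of_le hpt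
  rw [height_extWord_add s hT (by omega)]
  exact hs.1 j (mem_range.2 (by omega))

theorem height_extWord_cases {s : Fin L → Bool} (hs : IsDyck s) (hT : p + L ≤ T) {t : ℕ}
    (ht : t ≤ T) :
    t < p ∧ height (-p) (extWord p T s) t = t - p ∨
      p ≤ t ∧ t ≤ p + L ∧ 0 ≤ height (-p) (extWord p T s) t ∨
      p + L < t ∧ height (-p) (extWord p T s) t = p + L - t := by
  rcases lt_or_ge t p with hp | hp
  · exact .inl ⟨hp, height_extWord_of_le s ht hp.le⟩
  · rcases le_or_gt t (p + L) with hL | hL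
    · exact .inr (.inl ⟨hp, hL, height_extWord_nonneg hs hT hp hL⟩)
    · exact .inr (.inr ⟨hL, height_extWord_of_ge hs hL.le ht⟩)

theorem isAdmissible_extWord {s : Fin L → Bool} (hs : IsDyck s) (hT : p + L + q = T) (hp : p ≤ N)
    (hN : N ≤ p + L) : IsAdmissible N (-p) (-q) (extWord p T s) := by
  have hle : p + L ≤ T := by omega
  refine ⟨by rw [height_extWord_of_ge hs hle le_rfl]; omega, fun t ht => ?_⟩
  have hstep := height_succ (-p) (extWord p T s) t
  have ht₀ := height_extWord_cases hs hle ht.le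
  have ht₁ := height_extWord_cases hs hle (show t + 1 ≤ T from ht)
  constructor <;> intro h <;> rw [h] at hstep <;> push_cast at * <;> omega

theorem extWord_injective (hT : p + L ≤ T) :
    Function.Injective (extWord p T : (Fin L → Bool) → Fin T → Bool) := by
  intro s s' h
  funext j
  simpa [extWord] using congrFun h ⟨p + j, by omega⟩

theorem IsAdmissible.height_of_le {b : ℤ} {u : Fin T → Bool} (hu : IsAdmissible N (-p) b u) {t : ℕ}
    (ht : t ≤ T) (htN : t ≤ N) :
    (t ≤ p → height (-p) u t = t - p) ∧ (p ≤ t → 0 ≤ height (-p) u t) := by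
  induction t with
  | zero => rw [height_zero]; omega
  | succ t ih =>
    have hstep := hu.2 t ht
    have := ih (by omega) (by omega)
    rw [height_succ]
    rcases stepVal_eq_or u ht with h | h <;> omega

theorem IsAdmissible.height_of_ge {a : ℤ} {u : Fin T → Bool} (hu : IsAdmissible N a (-q) u) {t : ℕ}
    (ht : t ≤ T) (htN : N ≤ t) :
    (T ≤ t + q → height a u t = T - t - q) ∧ (t + q ≤ T → 0 ≤ height a u t) := by
  induction ht using Nat.decreasingInduction with
  | self => rw [hu.1]; omega
  | of_succ t ht ih =>
    have hstep := hu.2 t ht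
    have := ih (by omega)
    rw [height_succ] at this
    rcases stepVal_eq_or u ht with h | h <;> omega

theorem exists_extWord_eq {u : Fin T → Bool} (hu : IsAdmissible N (-p) (-q) u)
    (hT : p + L + q = T) (hp : p ≤ N) (hN : N ≤ p + L) :
    ∃ s : Fin L → Bool, IsDyck s ∧ extWord p T s = u := by
  have hleft {t : ℕ} (ht : t < p) : stepVal u t = 1 := by
    have h₀ := (hu.height_of_le (t := t) (by omega) (by omega)).1 ht.le
    have h₁ := (hu.height_of_le (t := t + 1) (by omega) (by omega)).1 ht
    rw [height_succ] at h₁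
    omega
  have hright {t : ℕ} (ht : t < T) (htL : p + L ≤ t) : stepVal u t = -1 := by
    have h₀ := (hu.height_of_ge (t := t) (by omega) (by omega)).1 (by omega)
    have h₁ := (hu.height_of_ge (t := t + 1) (by omega) (by omega)).1 (by omega)
    rw [height_succ] at h₁
    omega
  have hext : extWord p T (fun j : Fin L => u ⟨p + j, by omega⟩) = u := by
    funext t
    rw [extWord]
    split_ifs with htp htL
    · exact ((stepVal_eq_one_iff u t).1 (hleft htp)).symm
    · exact congrArg u (Fin.ext (by simp only; omega))
    · exact ((stepVal_eq_neg_one_iff u t).1 (hright t.2 (by omega))).symm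
  refine ⟨_, ⟨fun j hj => ?_, ?_⟩, hext⟩
  · have hj' : j ≤ L := by simpa [Nat.lt_succ_iff] using hj
    rw [← height_extWord_add _ (show p + L ≤ T by omega) hj', hext]
    rcases le_total (p + j) N with h | h
    · exact (hu.height_of_le (by omega) h).2 (by omega)
    · exact (hu.height_of_ge (by omega) h).2 (by omega)
  · rw [← height_extWord_add _ (show p + L ≤ T by omega) le_rfl, hext,
      (hu.height_of_ge (by omega) hN).1 (by omega)]
    omega

theorem sum_dyckPaths {M : Type*} [AddCommMonoid M] (f : (Fin T → Bool) → M)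
    (hT : p + L + q = T) (hp : p ≤ N) (hN : N ≤ p + L) :
    ∑ s ∈ dyckPaths L, f (extWord p T s) =
      ∑ u : Fin T → Bool, if IsAdmissible N (-p) (-q) u then f u else 0 := by
  rw [← sum_filter]
  refine sum_nbij (extWord p T) (fun s hs => ?_) (extWord_injective (by omega)).injOn
    (fun u hu => ?_) fun _ _ => rfl
  · exact mem_filter.2 ⟨mem_univ _, isAdmissible_extWord (mem_filter.1 hs).2 hT hp hN⟩
  · obtain ⟨s, hs, rfl⟩ := exists_extWord_eq (mem_filter.1 hu).2 hT hp hN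
    exact ⟨s, mem_filter.2 ⟨mem_univ _, hs⟩, rfl⟩

theorem latticePt_extWord (N : ℕ) (s : Fin L → Bool) (hT : p + L ≤ T) {j : ℕ} (hj : j ≤ L) :
    latticePt N (p + j) (height (-p) (extWord p T s) (p + j)) = ptOf (p - N) s j := by
  rw [latticePt, height_extWord_add s hT hj, ptOf]
  congr 1
  push_cast
  ring

theorem succ_mem_valleys_iff {s : Fin L → Bool} {j : ℕ} :
    j + 1 ∈ valleys s ↔ j + 1 < L ∧ stepVal s j = -1 ∧ stepVal s (j + 1) = 1 := by
  rw [valleys, mem_filter, mem_Icc, Nat.add_sub_cancel]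
  exact and_congr_left fun _ => by omega

theorem isValleyStep_extWord {s : Fin L → Bool} (hs : IsDyck s) (hT : p + L ≤ T) {t : ℕ} :
    IsValleyStep (-p) (extWord p T s) t ↔ p ≤ t ∧ t - p + 1 ∈ valleys s := by
  rw [succ_mem_valleys_iff, IsValleyStep]
  constructor
  · rintro ⟨hdown, hup, -⟩
    have ht : t + 1 < T := by
      by_contra! h
      rw [stepVal_of_le _ h] at hup
      omega
    rw [stepVal_extWord p s (by omega)] at hdown hup
    split_ifs at hdown hup <;> try omega
    rw [show t + 1 - p = t - p + 1 by omega] at hup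
    exact ⟨by omega, by omega, hdown, hup⟩
  · rintro ⟨hpt, htL, hdown, hup⟩
    obtain ⟨j, rfl⟩ := Nat.exists_eq_add_of_le hpt
    rw [Nat.add_sub_cancel_left] at *
    have hpos := hs.1 (j + 1) (mem_range.2 (by omega))
    rw [pht_succ, hdown] at hpos
    rw [height_extWord_add s hT (by omega), stepVal_extWord p s (by omega), if_neg (by omega),
      if_pos (by omega), Nat.add_sub_cancel_left, add_assoc, stepVal_extWord p s (by omega),
      if_neg (by omega), if_pos (by omega), Nat.add_sub_cancel_left]
    exact ⟨hdown, hup, by omega⟩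

theorem pathWt_extWord (wt : ℤ × ℕ → F) (N : ℕ) {s : Fin L → Bool} (hs : IsDyck s)
    (hT : p + L < T) :
    pathWt wt N (-p) (extWord p T s) = ∏ j ∈ range (L + 1), wt (ptOf (p - N) s j) := by
  rw [pathWt, ← prod_range fun t => pointWt wt N t (height (-p) (extWord p T s) t)]
  symm
  refine prod_of_injOn (p + ·) (add_right_injective p).injOn ?_ ?_ ?_
  · intro j hj
    simp only [coe_range, Set.mem_Iio] at hj ⊢
    omega
  · intro t ht htj
    have hout : t < p ∨ p + L < t := by
      by_contra! h
      exact htj ⟨t - p, by simp only [coe_range, Set.mem_Iio]; omega, by simp only; omega⟩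
    have hneg := height_extWord_cases hs hT.le (mem_range.1 ht).le
    exact if_neg (by omega)
  · intro j hj
    have hj' : j ≤ L := Nat.lt_succ_iff.1 (mem_range.1 hj)
    rw [pointWt, latticePt_extWord N s hT.le hj', height_extWord_add s hT.le hj',
      if_pos (hs.1 j hj)]

theorem prod_reachedWt_extWord (wte : ℤ × ℕ → F) (N : ℕ) {s : Fin L → Bool} (hs : IsDyck s)
    (hT : p + L < T) :
    (∏ t : Fin T, if IsValleyStep (-p) (extWord p T s) t then
      reachedWt wte N (-p) (extWord p T s) t else 1) = ∏ j ∈ valleys s, wte (ptOf (p - N) s j) := by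
  rw [← prod_range fun t => if IsValleyStep (-p) (extWord p T s) t then
    reachedWt wte N (-p) (extWord p T s) t else 1, ← prod_filter]
  simp only [isValleyStep_extWord hs hT.le]
  have hvalley {j : ℕ} (hj : j ∈ valleys s) : 1 ≤ j ∧ j < L := by
    have := mem_Icc.1 (mem_filter.1 hj).1
    omega
  refine prod_bij' (fun t _ => t - p + 1) (fun j _ => p + (j - 1))
    (fun t ht => (mem_filter.1 ht).2.2) (fun j hj => ?_) (fun t ht => ?_) (fun j hj => ?_)
    fun t ht => ?_
  · have := hvalley hj
    refine mem_filter.2 ⟨mem_range.2 (by omega), by omega, ?_⟩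
    rwa [Nat.add_sub_cancel_left, Nat.sub_add_cancel this.1]
  · have := (mem_filter.1 ht).2.1
    omega
  · have := hvalley hj
    omega
  · obtain ⟨-, hpt, ht⟩ := mem_filter.1 ht
    obtain ⟨j, rfl⟩ := Nat.exists_eq_add_of_le hpt
    rw [Nat.add_sub_cancel_left] at *
    rw [reachedWt, add_assoc, latticePt_extWord N s hT.le (hvalley ht).2.le]

theorem pathValleyWt_extWord (wt wte : ℤ × ℕ → F) (N : ℕ) {s : Fin L → Bool} (hs : IsDyck s)
    (hT : p + L < T) :
    pathValleyWt wt wte N (-p) (extWord p T s) = wtVal wt wte (p - N) s := by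
  rw [pathValleyWt, wtVal, pathWt_extWord wt N hs hT, prod_reachedWt_extWord wte N hs hT]

theorem sum_dyckPaths_wtVal (wt wte : ℤ × ℕ → F) (hT : p + L + q = T) (hq : 0 < q) (hp : p ≤ N)
    (hN : N ≤ p + L) :
    ∑ s ∈ dyckPaths L, wtVal wt wte (p - N) s =
      runSum markStep (markWt wt wte N) 0 T (-p, false) (-q, false) := by
  rw [runSum_markWt, ← sum_dyckPaths _ hT hp hN]
  exact sum_congr rfl fun s hs =>
    (pathValleyWt_extWord wt wte N (mem_filter.1 hs).2 (by omega)).symm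

end Extension

section Tuple

variable {F : Type*} [Field F] {N p p₁ p₂ m m₁ m₂ n k : ℕ}

theorem aht_natCast_sub (s : Fin (2 * m) → Bool) (hN : p + m = N) {t : ℕ} (hpt : p ≤ t)
    (htp : t ≤ p + 2 * m) :
    aht m s ((t : ℤ) - N) = height (-p) (extWord p (2 * N) s) t := by
  obtain ⟨j, rfl⟩ := Nat.exists_eq_add_of_le hpt
  rw [height_extWord_add s (by omega) (by omega), aht]
  congr 1
  omega

section Pair

variable {s₁ : Fin (2 * m₁) → Bool} {s₂ : Fin (2 * m₂) → Bool} (hs₁ : IsDyck s₁) (hs₂ : IsDyck s₂)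
  (h₁ : p₁ + m₁ = N) (h₂ : p₂ + m₂ = N) (hp : p₂ < p₁)

include hs₁ hs₂ h₁ h₂ hp

theorem height_extWord_lt {t : ℕ} (ht : t ≤ 2 * N) (hout : t < p₁ ∨ p₁ + 2 * m₁ < t) :
    height (-p₁) (extWord p₁ (2 * N) s₁) t < height (-p₂) (extWord p₂ (2 * N) s₂) t := by
  have := height_extWord_cases (p := p₁) hs₁ (by omega) ht
  have := height_extWord_cases (p := p₂) hs₂ (by omega) ht
  omega

theorem pathLE_iff : PathLE m₁ m₂ s₁ s₂ ↔
    IsWeaklyBelow (-p₁) (extWord p₁ (2 * N) s₁) (-p₂) (extWord p₂ (2 * N) s₂) := by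
  have haht₁ {t : ℕ} := aht_natCast_sub (t := t) s₁ h₁
  have haht₂ {t : ℕ} (h : p₁ ≤ t) (h' : t ≤ p₁ + 2 * m₁) :=
    aht_natCast_sub (t := t) s₂ h₂ (by omega) (by omega)
  have hlt {t : ℕ} := height_extWord_lt (t := t) hs₁ hs₂ h₁ h₂ hp
  have hnext (t : ℕ) : (t : ℤ) - N + 1 = (t + 1 : ℕ) - N := by omega
  constructor
  · rintro ⟨hle, hshare⟩
    refine ⟨fun t ht => ?_, fun t ht heq heq' => ?_⟩
    · by_cases hout : t < p₁ ∨ p₁ + 2 * m₁ < t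
      · exact (hlt ht hout).le
      · rw [← haht₁ (by omega) (by omega), ← haht₂ (by omega) (by omega)]
        exact hle _ (mem_Icc.2 (by omega))
    · have hin : p₁ ≤ t ∧ t < p₁ + 2 * m₁ := by
        have := mt (hlt ht.le) heq.not_lt
        have := mt (hlt (show t + 1 ≤ 2 * N from ht)) heq'.not_lt
        omega
      refine hshare (t - N) (mem_Icc.2 (by omega)) ?_
      rw [hnext, haht₁ hin.1 hin.2.le, haht₂ hin.1 hin.2.le, haht₁ (by omega) hin.2,
        haht₂ (by omega) hin.2]
      exact ⟨heq, heq'⟩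
  · have htime {x : ℤ} (hx : -(m₁ : ℤ) ≤ x) : ∃ t : ℕ, x = t - N ∧ p₁ ≤ t :=
      ⟨(x + N).toNat, by omega, by omega⟩
    rintro ⟨hle, hshare⟩
    refine ⟨fun x hx => ?_, fun x hx => ?_⟩ <;>
      obtain ⟨hx₀, hx₁⟩ := mem_Icc.1 hx <;> obtain ⟨t, rfl, ht⟩ := htime hx₀
    · rw [haht₁ ht (by omega), haht₂ ht (by omega)]
      exact hle t (by omega)
    · rw [hnext, haht₁ ht (by omega), haht₂ ht (by omega), haht₁ (by omega) (by omega),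
        haht₂ (by omega) (by omega), not_and]
      exact hshare t (by omega)

theorem interProd_eq (f : ℤ × ℕ → F) : interProd f m₁ m₂ s₁ s₂ =
    ∏ t : Fin (2 * N), if height (-p₁) (extWord p₁ (2 * N) s₁) (t + 1) =
        height (-p₂) (extWord p₂ (2 * N) s₂) (t + 1) then
      f (latticePt N (t + 1) (height (-p₂) (extWord p₂ (2 * N) s₂) (t + 1))) else 1 := by
  have haht₁ {t : ℕ} := aht_natCast_sub (t := t) s₁ h₁
  have haht₂ {t : ℕ} (h : p₁ ≤ t) (h' : t ≤ p₁ + 2 * m₁) :=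
    aht_natCast_sub (t := t) s₂ h₂ (by omega) (by omega)
  rw [← prod_range fun t => if height (-p₁) (extWord p₁ (2 * N) s₁) (t + 1) =
      height (-p₂) (extWord p₂ (2 * N) s₂) (t + 1) then
    f (latticePt N (t + 1) (height (-p₂) (extWord p₂ (2 * N) s₂) (t + 1))) else 1, ← prod_filter]
  have hin {t : ℕ} (ht : t ∈ {t ∈ range (2 * N) | height (-p₁) (extWord p₁ (2 * N) s₁) (t + 1) =
      height (-p₂) (extWord p₂ (2 * N) s₂) (t + 1)}) : p₁ ≤ t + 1 ∧ t + 1 ≤ p₁ + 2 * m₁ := by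
    obtain ⟨ht, heq⟩ := mem_filter.1 ht
    have := mt (height_extWord_lt hs₁ hs₂ h₁ h₂ hp (mem_range.1 ht)) heq.not_lt
    omega
  symm
  refine prod_nbij (fun t => ((t + 1 : ℕ) : ℤ) - N) (fun t ht => ?_) (fun t _ t' _ h => ?_)
    (fun x hx => ?_) fun t ht => ?_
  · obtain ⟨hpt, htp⟩ := hin ht
    refine mem_filter.2 ⟨mem_Icc.2 (by omega), ?_⟩
    rw [haht₁ hpt htp, haht₂ hpt htp, (mem_filter.1 ht).2]
  · simp only at h
    omega
  · obtain ⟨hx, heq⟩ := mem_filter.1 hx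
    obtain ⟨hx₀, hx₁⟩ := mem_Icc.1 hx
    obtain ⟨t, rfl⟩ : ∃ t : ℕ, x = (t + 1 : ℕ) - N := ⟨(x + N).toNat - 1, by omega⟩
    rw [haht₁ (by omega) (by omega), haht₂ (by omega) (by omega)] at heq
    exact ⟨t, mem_filter.2 ⟨mem_range.2 (by omega), heq⟩, rfl⟩
  · obtain ⟨hpt, htp⟩ := hin ht
    rw [latticePt, ← (mem_filter.1 ht).2, haht₁ hpt htp]

end Pair

/-- The number of up-steps that extend the `i`-th path of a tuple to the left. -/
def depth (k i : ℕ) : ℕ := 2 * (k - i)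

theorem strictMono_neg_depth : StrictMono fun i : Fin k => -(depth k i : ℤ) := by
  intro i j hij
  have := Fin.lt_def.1 hij
  simp only [depth]
  omega

/-- The paths of a tuple, extended to the common length `2 * (n + 2 * k)`. -/
def extTuple (D : DyckTuple n k) (i : Fin k) : Fin (2 * (n + 2 * k)) → Bool :=
  extWord (depth k i) (2 * (n + 2 * k)) (D i)

theorem depth_add (n : ℕ) (i : Fin k) : depth k i + (n + 2 * i) = n + 2 * k := by
  rw [depth]
  omega

theorem mem_weakTuples_iff {D : DyckTuple n k} : D ∈ weakTuples n k ↔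
    (∀ i, IsDyck (D i)) ∧ IsOrdered (fun i => -(depth k i : ℤ)) (extTuple D) := by
  rw [weakTuples, mem_filter, and_iff_right (mem_univ _)]
  refine and_congr_right fun hD => ?_
  have hpair (i j : Fin k) (hij : (i : ℕ) + 1 = j) := pathLE_iff (hD i) (hD j) (depth_add n i)
    (depth_add n j) (by rw [depth, depth]; omega)
  constructor
  · rintro h ⟨i, hi⟩ ⟨j, hj⟩ rfl
    exact (hpair ⟨i, hi⟩ _ rfl).1 (h i hj)
  · exact fun h i hi => (hpair ⟨i, by omega⟩ ⟨i + 1, hi⟩ rfl).2 (h _ _ rfl)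

theorem sum_weakTuples {M : Type*} [AddCommMonoid M]
    (f : (Fin k → Fin (2 * (n + 2 * k)) → Bool) → M) :
    ∑ D ∈ weakTuples n k, f (extTuple D) = ∑ u : Fin k → Fin (2 * (n + 2 * k)) → Bool,
      if (∀ i : Fin k, IsAdmissible (n + 2 * k) (-(depth k i : ℤ)) (-(depth k i : ℤ)) (u i)) ∧
        IsOrdered (fun i => -(depth k i : ℤ)) u then f u else 0 := by
  have hlen (i : Fin k) : depth k i + 2 * (n + 2 * i) + depth k i = 2 * (n + 2 * k) := by
    have := depth_add n i
    omega
  have hle (i : Fin k) : depth k i ≤ n + 2 * k ∧ n + 2 * k ≤ depth k i + 2 * (n + 2 * i) := by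
    have := depth_add n i
    omega
  rw [← sum_filter]
  refine sum_nbij extTuple (fun D hD => ?_) (fun D _ D' _ h => ?_) (fun u hu => ?_) fun _ _ => rfl
  · obtain ⟨hD, hord⟩ := mem_weakTuples_iff.1 hD
    exact mem_filter.2 ⟨mem_univ _,
      fun i => isAdmissible_extWord (hD i) (hlen i) (hle i).1 (hle i).2, hord⟩
  · exact funext fun i => extWord_injective (by have := hlen i; omega) (congrFun h i)
  · obtain ⟨hadm, hord⟩ := (mem_filter.1 hu).2
    choose D hD hext using fun i => exists_extWord_eq (hadm i) (hlen i) (hle i).1 (hle i).2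
    obtain rfl : extTuple D = u := funext hext
    exact ⟨D, mem_weakTuples_iff.2 ⟨hD, hord⟩, rfl⟩

theorem contactWt_extTuple (wte : ℤ × ℕ → F) {D : DyckTuple n k} (hD : ∀ i, IsDyck (D i)) :
    contactWt wte (n + 2 * k) (fun i => -(depth k i : ℤ)) (extTuple D) =
      ∏ j : Fin (k - 1), interProd (fun p => 1 - (wte p)⁻¹) (n + 2 * (j : ℕ))
        (n + 2 * ((j : ℕ) + 1)) (D ⟨(j : ℕ), by have := j.isLt; omega⟩)
        (D ⟨(j : ℕ) + 1, by have := j.isLt; omega⟩) := by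
  cases k with
  | zero => rfl
  | succ k =>
    have hfirst (t : ℕ) : ¬Touches (fun i => -(depth (k + 1) i : ℤ)) (extTuple D) 0 t :=
      fun ⟨_, hj, _⟩ => Nat.succ_ne_zero _ hj
    rw [contactWt, Fin.prod_univ_succ]
    simp only [hfirst, if_false, prod_const_one, one_mul]
    refine prod_congr rfl fun j _ => ?_
    have hj := j.2
    rw [interProd_eq (hD ⟨j, by omega⟩) (hD ⟨j + 1, by omega⟩) (depth_add n ⟨j, by omega⟩)
      (depth_add n ⟨j + 1, by omega⟩) (by simp only [depth]; omega)]
    refine prod_congr rfl fun t _ => if_congr ⟨?_, fun h => ⟨⟨j, by omega⟩, rfl, h⟩⟩ rfl rfl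
    rintro ⟨⟨i, hi⟩, hij, hmeet⟩
    obtain rfl : i = j := by simpa using hij
    exact hmeet

theorem weakSum_eq_sum (wt wte : ℤ × ℕ → F) (n k : ℕ) :
    weakSum wt wte n k = ∑ u : Fin k → Fin (2 * (n + 2 * k)) → Bool,
      if (∀ i : Fin k, IsAdmissible (n + 2 * k) (-(depth k i : ℤ)) (-(depth k i : ℤ)) (u i)) ∧
        IsOrdered (fun i => -(depth k i : ℤ)) u then
      (∏ i : Fin k, pathValleyWt wt wte (n + 2 * k) (-(depth k i : ℤ)) (u i)) *
        contactWt wte (n + 2 * k) (fun i => -(depth k i : ℤ)) u else 0 := by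
  rw [weakSum, ← sum_weakTuples]
  refine sum_congr rfl fun D hD => ?_
  obtain ⟨hD, -⟩ := mem_weakTuples_iff.1 hD
  rw [contactWt_extTuple wte hD]
  refine congrArg (· * _) (prod_congr rfl fun i _ => ?_)
  have hlen : depth k i + 2 * (n + 2 * i) < 2 * (n + 2 * k) := by
    rw [depth]
    omega
  have hi := depth_add n i
  rw [extTuple, pathValleyWt_extWord wt wte _ (hD i) hlen]
  congr 1
  omega

end Tuple

theorem statement_10 {F : Type*} [Field F] (wt wte : ℤ × ℕ → F)
    (hwte : ∀ p, wte p ≠ 0) (n k : ℕ) :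
    (Matrix.of fun i j : Fin k =>
        ∑ s ∈ dyckPaths (2 * n + 2 * (i : ℕ) + 2 * (j : ℕ)),
          wtVal wt wte (-(n : ℤ) - 2 * (i : ℕ)) s).det =
      weakSum wt wte n k := by
  let a (i : Fin k) : ℤ := -(depth k i : ℤ)
  have ha : StrictMono a := strictMono_neg_depth
  have hpar (i j : Fin k) : a i % 2 = a j % 2 := by simp only [a, depth]; omega
  have hinc : IsIncreasing markLT fun i => (a i, false) := fun i j hij =>
    markLT_iff.2 ⟨hpar i j, .inl (ha hij)⟩
  have hentry (i j : Fin k) : ∑ s ∈ dyckPaths (2 * n + 2 * (i : ℕ) + 2 * (j : ℕ)),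
      wtVal wt wte (-(n : ℤ) - 2 * (i : ℕ)) s = runSum markStep (markWt wt wte (n + 2 * k)) 0
        (2 * (n + 2 * k)) (a i, false) (a j, false) := by
    rw [show -(n : ℤ) - 2 * (i : ℕ) = depth k i - (n + 2 * k : ℕ) by rw [depth]; omega]
    apply sum_dyckPaths_wtVal <;> simp only [depth] <;> omega
  simp only [hentry]
  rw [weakSum_eq_sum, ← increasingRunSum_markWt wt hwte ha hpar ha]
  refine det_runSum (fun t x x' l l' h hl hl' => ?_) hinc _ _ hinc
  exact (isLegal_of_markWt_ne_zero hl).markStep_eq_or_markLT (isLegal_of_markWt_ne_zero hl') h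

end Paper
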